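/- arXiv:1807.10121 — 2 statements merged into one kernel-verified Lean document; each statement's English description precedes it below -/
import Mathlib

section
/- Assume gcd(n, q) = 1 and let X^n − 1 = p_1(X)p_2(X)⋯p_s(X) be the factorization into distinct monic irreducible polynomials in F_q[X]. For 1 ≤ i ≤ s set m_i(X) = (X^n − 1)/p_i(X). For α ∈ F_Q^× let Δ = {i : 1 ≤ i ≤ s, m_i(φ_q)(α) ≠ 0}. Then the conventional minimal polynomial of α is m_α = ∏_{i∈Δ} p_i(X), and α is k-normal for F_Q/F_q with k = n − Σ_{i∈Δ} deg p_i. -/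
/-!
Composing with Frobenius makes `F_Q` an `F_q[X]`-module, and `lineval q f α` is the action of `f` on
`α`; the polynomials killing `α` form an ideal `linAnn`. This ideal contains `Xⁿ - 1 = ∏ Pᵢ`, whose
factors are pairwise coprime, so its generator is the product of the `Pᵢ` dividing it, and these
are the `Pᵢ` whose cofactor `(Xⁿ - 1) / Pᵢ` does not kill `α` (`isMinPoly_prod`).

For the degree of the gcd, the point is that `f · g_α ≡ g_{f(φ_q)(α)}` modulo `Xⁿ - 1` for
`f ∈ F_q[X]` (`dvd_map_mul_gpoly_sub`), so that `f` kills `α` exactly when `Xⁿ - 1 ∣ f · g_α`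
(`lineval_eq_zero_iff`). If the gcd of `g_α` and `Xⁿ - 1` were known to lie in `F_q[X]`, its
cofactor in `Xⁿ - 1` would therefore be the minimal polynomial up to a unit. It does lie there once
made monic, because the Frobenius action on coefficients takes `g_α` to `X · g_α` modulo `Xⁿ - 1`
and hence fixes the gcd (`exists_map_eq_gcd`).
-/


open Polynomial

/-- Evaluation of the `q`-linearized polynomial associated to `f`:
if `f = Σ aᵢ Xⁱ` then `lineval q f α = Σ aᵢ α^(q^i)` (i.e. `f(φ_q)(α)`). -/
noncomputable def lineval {Fq FQ : Type*} [CommSemiring Fq] [CommSemiring FQ] [Algebra Fq FQ]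
    (q : ℕ) (f : Polynomial Fq) (α : FQ) : FQ :=
  f.sum fun i a => algebraMap Fq FQ a * α ^ q ^ i

/-- `g_α(X) = Σ_{i=0}^{n-1} α^(q^i) X^(n-1-i) ∈ F_Q[X]`. -/
noncomputable def gpoly {FQ : Type*} [CommSemiring FQ] (q n : ℕ) (α : FQ) : Polynomial FQ :=
  ∑ i ∈ Finset.range n, Polynomial.C (α ^ q ^ i) * Polynomial.X ^ (n - 1 - i)

/-- `α` is `k`-normal for `F_Q/F_q`: `deg gcd(g_α(X), Xⁿ - 1) = k` in `F_Q[X]`. -/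
def IsKNormal {FQ : Type*} [Field FQ] (q n k : ℕ) (α : FQ) : Prop :=
  letI := Classical.decEq (Polynomial FQ)
  (EuclideanDomain.gcd (gpoly q n α) (Polynomial.X ^ n - 1)).natDegree = k

/-- `m` is the conventional minimal polynomial of `α`: the monic generator of the ideal
`{f ∈ F_q[X] : f(φ_q)(α) = 0}`. -/
def IsMinPoly {Fq FQ : Type*} [CommSemiring Fq] [CommSemiring FQ] [Algebra Fq FQ]
    (q : ℕ) (α : FQ) (m : Polynomial Fq) : Prop :=
  m.Monic ∧ lineval q m α = 0 ∧ ∀ g : Polynomial Fq, lineval q g α = 0 → m ∣ g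

/-! ### The annihilator of an element under Frobenius -/

section Frobenius

variable {K L : Type*} [Field K] [Fintype K] [Field L] [Algebra K L]

/-- The Galois group is generated by Frobenius, so elements fixed by Frobenius lie in `K`. -/
lemma mem_range_of_pow_card_eq [Fintype L] {x : L} (hx : x ^ Fintype.card K = x) :
    x ∈ Set.range (algebraMap K L) := by
  refine (IsGalois.mem_range_algebraMap_iff_fixed x).2 fun f => ?_
  obtain ⟨i, rfl⟩ := (FiniteField.bijective_frobeniusAlgEquivOfAlgebraic_pow K L).2 f
  have : Function.IsFixedPt (FiniteField.frobeniusAlgEquivOfAlgebraic K L) x := hx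
  simpa [AlgEquiv.coe_pow] using! this.iterate i

lemma frobenius_pow_apply (i : ℕ) (α : L) :
    ((FiniteField.frobeniusAlgHom K L).toLinearMap ^ i) α = α ^ Fintype.card K ^ i := by
  induction i with
  | zero => simp
  | succ i ih => rw [pow_succ', Module.End.mul_apply, ih]; simp [← pow_mul, pow_succ]

lemma lineval_eq_aeval (f : K[X]) (α : L) :
    lineval (Fintype.card K) f α = aeval (FiniteField.frobeniusAlgHom K L).toLinearMap f α := by
  rw [lineval, aeval_endomorphism]
  simp only [frobenius_pow_apply, Algebra.smul_def]

lemma lineval_add (f g : K[X]) (α : L) :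
    lineval (Fintype.card K) (f + g) α =
      lineval (Fintype.card K) f α + lineval (Fintype.card K) g α := by
  simp [lineval_eq_aeval]

lemma lineval_mul_eq_zero {f : K[X]} {α : L} (g : K[X])
    (h : lineval (Fintype.card K) f α = 0) : lineval (Fintype.card K) (g * f) α = 0 := by
  rw [lineval_eq_aeval] at h ⊢
  rw [map_mul, Module.End.mul_apply, h, map_zero]

/-- The annihilator of `α` in `K[X]`, where `X` acts on `L` by the Frobenius map `x ↦ x ^ |K|`. -/
def linAnn (K : Type*) {L : Type*} [Field K] [Fintype K] [Field L] [Algebra K L] (α : L) :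
    Ideal K[X] where
  carrier := {f | lineval (Fintype.card K) f α = 0}
  add_mem' {f g} hf hg := by
    change lineval _ _ _ = 0 at hf hg
    change lineval _ _ _ = 0
    rw [lineval_add, hf, hg, add_zero]
  zero_mem' := by simp [lineval]
  smul_mem' c _ hf := lineval_mul_eq_zero c hf

lemma lineval_X_pow_sub_one [Fintype L] {n : ℕ} (hL : Fintype.card L = Fintype.card K ^ n)
    (α : L) : lineval (Fintype.card K) (X ^ n - 1 : K[X]) α = 0 := by
  rw [lineval_eq_aeval]
  simp [frobenius_pow_apply, ← hL, FiniteField.pow_card]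

end Frobenius

/-! ### The conventional minimal polynomial -/

section MinPoly

variable {K L : Type*} [Field K] [Fintype K] [Field L] [Algebra K L]

open scoped Classical in
/-- Since the ideal `I = linAnn K α` contains `Xⁿ - 1 = ∏ Pᵢ`, its generator `d` is a product of some of the
`Pᵢ`; and `Pᵢ ∤ d` exactly when `d ∣ (Xⁿ - 1) / Pᵢ`, that is, when `(Xⁿ - 1) / Pᵢ ∈ I`. -/
lemma isMinPoly_prod [Fintype L] {n s : ℕ} (hL : Fintype.card L = Fintype.card K ^ n)
    (P : Fin s → K[X]) (hmono : ∀ i, (P i).Monic) (hirr : ∀ i, Irreducible (P i))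
    (hdist : Function.Injective P) (hprod : ∏ i, P i = X ^ n - 1) (α : L) :
    IsMinPoly (Fintype.card K) α
      (∏ i ∈ Finset.univ.filter
          (fun i => lineval (Fintype.card K) ((X ^ n - 1) /ₘ P i) α ≠ 0), P i) := by
  set d := Submodule.IsPrincipal.generator (linAnn K α) with hd
  have hmem : ∀ f : K[X], lineval (Fintype.card K) f α = 0 ↔ d ∣ f := fun f =>
    Submodule.IsPrincipal.mem_iff_generator_dvd (linAnn K α) (x := f)
  have hcop : ∀ i j, i ≠ j → IsCoprime (P i) (P j) := fun i j hij =>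
    ((hirr i).coprime_iff_not_dvd).2 fun h => hij <| hdist <|
      eq_of_monic_of_associated (hmono i) (hmono j) ((hirr i).associated_of_dvd (hirr j) h)
  have hdvd : d ∣ X ^ n - 1 := (hmem _).1 (lineval_X_pow_sub_one hL α)
  have hmul : ∀ i, P i * ((X ^ n - 1) /ₘ P i) = X ^ n - 1 := fun i => by
    have h := modByMonic_add_div (X ^ n - 1 : K[X]) (P i)
    rwa [(modByMonic_eq_zero_iff_dvd (hmono i)).2
      (hprod ▸ Finset.dvd_prod_of_mem P (Finset.mem_univ i)), zero_add] at h
  have hquot : ∀ i, (X ^ n - 1) /ₘ P i = ∏ j ∈ Finset.univ.erase i, P j := fun i => by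
    apply mul_left_cancel₀ (hirr i).ne_zero
    rw [hmul, Finset.mul_prod_erase _ _ (Finset.mem_univ i), hprod]
  have hkey : ∀ i, d ∣ (X ^ n - 1) /ₘ P i ↔ ¬ P i ∣ d := fun i => by
    constructor
    · intro h h'
      have h2 := h'.trans h
      rw [hquot] at h2
      exact (hirr i).not_isUnit ((IsCoprime.prod_right fun j hj =>
        hcop i j (Finset.ne_of_mem_erase hj).symm).isUnit_of_dvd' dvd_rfl h2)
    · intro h
      refine (((hirr i).coprime_iff_not_dvd).2 h).symm.dvd_of_dvd_mul_left ?_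
      rw [hmul]
      exact hdvd
  refine ⟨monic_prod_of_monic _ _ fun i _ => hmono i, ?_, fun g hg => ?_⟩
  · rw [hmem]
    rw [← hprod, ← Finset.prod_filter_mul_prod_filter_not Finset.univ
      (fun i => lineval (Fintype.card K) ((X ^ n - 1) /ₘ P i) α ≠ 0)] at hdvd
    refine IsCoprime.dvd_of_dvd_mul_right (IsCoprime.prod_right fun i hi => ?_) hdvd
    rw [Finset.mem_filter, not_not, hmem, hkey] at hi
    exact (((hirr i).coprime_iff_not_dvd).2 hi.2).symm
  · refine (Finset.prod_dvd_of_coprime (fun i _ j _ hij => hcop i j hij) fun i hi => ?_).trans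
      ((hmem g).1 hg)
    rw [Finset.mem_filter, Ne, hmem, hkey, not_not] at hi
    exact hi.2

end MinPoly

/-! ### The degree of the gcd -/

section Normality

variable {K L : Type*} [Field K] [Fintype K] [Field L] [Algebra K L]

lemma gpoly_add (n : ℕ) (α β : L) :
    gpoly (Fintype.card K) n (α + β) =
      gpoly (Fintype.card K) n α + gpoly (Fintype.card K) n β := by
  simp only [gpoly, ← Finset.sum_add_distrib]
  refine Finset.sum_congr rfl fun i _ => ?_
  have h := map_add ((FiniteField.frobeniusAlgHom K L) ^ i) α β
  simp only [AlgHom.coe_pow, FiniteField.coe_frobeniusAlgHom, pow_iterate] at h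
  rw [h, C_add, add_mul]

lemma gpoly_algebraMap_mul (n : ℕ) (a : K) (β : L) :
    gpoly (Fintype.card K) n (algebraMap K L a * β) =
      C (algebraMap K L a) * gpoly (Fintype.card K) n β := by
  simp only [gpoly, Finset.mul_sum]
  refine Finset.sum_congr rfl fun i _ => ?_
  rw [mul_pow, ← map_pow, FiniteField.pow_card_pow, C_mul, mul_assoc]

/-- `g_β` has degree less than `n`, and its coefficient of `Xⁿ⁻¹` is `β`. -/
lemma eq_zero_of_dvd_gpoly {q n : ℕ} (hn : 0 < n) {β : L} (h : (X ^ n - 1 : L[X]) ∣ gpoly q n β) :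
    β = 0 := by
  have hdeg : (gpoly q n β).degree < (X ^ n - 1 : L[X]).degree := by
    rw [← C_1, degree_X_pow_sub_C hn, gpoly]
    refine (degree_sum_le _ _).trans_lt ((Finset.sup_lt_iff (WithBot.bot_lt_coe n)).2 fun i _ => ?_)
    refine (degree_C_mul_X_pow_le _ _).trans_lt ?_
    exact Nat.cast_lt.2 (by omega)
  have h0 := eq_zero_of_dvd_of_degree_lt h hdeg
  have h1 := congrArg (fun f => coeff f (n - 1)) h0
  simp only [gpoly, finsetSum_coeff, coeff_C_mul, coeff_X_pow, coeff_zero] at h1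
  rw [Finset.sum_eq_single 0] at h1
  · simpa using h1
  · intro i hi hi0
    rw [if_neg, mul_zero]
    rw [Finset.mem_range] at hi
    omega
  · intro h
    exact absurd (Finset.mem_range.2 hn) h

lemma gpoly_zero (n : ℕ) : gpoly (Fintype.card K) n (0 : L) = 0 := by
  simpa using gpoly_algebraMap_mul (K := K) n 0 (0 : L)

/-- Applying Frobenius to `β` shifts the coefficients of `g_β` cyclically, because `β ^ q ^ n = β`. -/
lemma dvd_X_mul_gpoly_sub [Fintype L] {n : ℕ} (hL : Fintype.card L = Fintype.card K ^ n) (β : L) :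
    (X ^ n - 1 : L[X]) ∣
      X * gpoly (Fintype.card K) n β - gpoly (Fintype.card K) n (β ^ Fintype.card K) := by
  obtain _ | n := n
  · simp [gpoly]
  have hb : β ^ Fintype.card K ^ (n + 1) = β := by rw [← hL, FiniteField.pow_card]
  refine ⟨C β, ?_⟩
  simp only [gpoly]
  rw [Finset.sum_range_succ', Finset.sum_range_succ (n := n) (f := fun i =>
    C ((β ^ Fintype.card K) ^ Fintype.card K ^ i) * X ^ (n + 1 - 1 - i)), mul_add, Finset.mul_sum]
  have : ∀ i ∈ Finset.range n,
      X * (C (β ^ Fintype.card K ^ (i + 1)) * X ^ (n + 1 - 1 - (i + 1)) : L[X]) =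
        C ((β ^ Fintype.card K) ^ Fintype.card K ^ i) * X ^ (n + 1 - 1 - i) := fun i hi => by
    rw [Finset.mem_range] at hi
    rw [show n + 1 - 1 - i = n + 1 - 1 - (i + 1) + 1 by omega, ← pow_mul, ← pow_succ']
    ring
  rw [Finset.sum_congr rfl this, ← pow_mul β, ← pow_succ', hb]
  simp
  ring

/-- Modulo `Xⁿ - 1`, multiplication of `g_α` by `f` corresponds to applying `f(φ_q)` to `α`. -/
lemma dvd_map_mul_gpoly_sub [Fintype L] {n : ℕ} (hL : Fintype.card L = Fintype.card K ^ n) (f : K[X])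
    (α : L) :
    (X ^ n - 1 : L[X]) ∣ f.map (algebraMap K L) * gpoly (Fintype.card K) n α -
      gpoly (Fintype.card K) n (lineval (Fintype.card K) f α) := by
  induction f using Polynomial.induction_on' with
  | add f g hf hg =>
    rw [lineval_add, gpoly_add, Polynomial.map_add, add_mul, add_sub_add_comm]
    exact dvd_add hf hg
  | monomial k a =>
    have hk : (X ^ n - 1 : L[X]) ∣ X ^ k * gpoly (Fintype.card K) n α -
        gpoly (Fintype.card K) n (α ^ Fintype.card K ^ k) := by
      induction k with
      | zero => simp
      | succ k ih =>
        have h := dvd_add (ih.mul_left X) (dvd_X_mul_gpoly_sub hL (α ^ Fintype.card K ^ k))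
        rw [← pow_mul, ← pow_succ] at h
        convert h using 1
        ring
    rw [lineval, sum_monomial_index _ _ (by simp), gpoly_algebraMap_mul, map_monomial,
      ← C_mul_X_pow_eq_monomial, mul_assoc, ← mul_sub]
    exact hk.mul_left _

lemma lineval_eq_zero_iff [Fintype L] {n : ℕ} (hn : 0 < n) (hL : Fintype.card L = Fintype.card K ^ n)
    (f : K[X]) (α : L) :
    lineval (Fintype.card K) f α = 0 ↔
      (X ^ n - 1 : L[X]) ∣ f.map (algebraMap K L) * gpoly (Fintype.card K) n α := by
  have h := dvd_map_mul_gpoly_sub hL f α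
  constructor
  · intro h0
    rwa [h0, gpoly_zero, sub_zero] at h
  · intro h0
    exact eq_zero_of_dvd_gpoly hn ((dvd_sub_right h0).1 h)

lemma gpoly_map_frobenius (n : ℕ) (α : L) :
    (gpoly (Fintype.card K) n α).map (FiniteField.frobeniusAlgHom K L).toRingHom =
      gpoly (Fintype.card K) n (α ^ Fintype.card K) := by
  simp only [gpoly, Polynomial.map_sum, Polynomial.map_mul, map_C, Polynomial.map_pow, map_X]
  refine Finset.sum_congr rfl fun i _ => ?_
  congr 2
  simp [← pow_mul, mul_comm]

/-- A monic greatest common divisor of `g_α` and `Xⁿ - 1` has coefficients in `K`: raising the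
coefficients to the power `|K|` fixes `Xⁿ - 1` and multiplies `g_α` by the unit `X` modulo
`Xⁿ - 1`, so it fixes the gcd. -/
lemma exists_map_eq_gcd [Fintype L] {n : ℕ} (hn : 0 < n) (hL : Fintype.card L = Fintype.card K ^ n) (α : L)
    {h : L[X]} (hm : h.Monic) (hg : h ∣ gpoly (Fintype.card K) n α) (hX : h ∣ X ^ n - 1)
    (hgcd : ∀ e : L[X], e ∣ gpoly (Fintype.card K) n α → e ∣ X ^ n - 1 → e ∣ h) :
    ∃ h' : K[X], h'.map (algebraMap K L) = h := by
  set σ : L →+* L := (FiniteField.frobeniusAlgHom K L).toRingHom with hσ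
  have hσX : h.map σ ∣ X ^ n - 1 := by simpa using Polynomial.map_dvd σ hX
  have hσg : h.map σ ∣ gpoly (Fintype.card K) n α := by
    have h1 := Polynomial.map_dvd σ hg
    rw [hσ, gpoly_map_frobenius] at h1
    have h2 := (dvd_sub_left h1).1 (hσX.trans (dvd_X_mul_gpoly_sub hL α))
    have hcop : IsCoprime (X ^ n - 1 : L[X]) X := by
      refine ⟨-1, X ^ (n - 1), ?_⟩
      rw [← pow_succ, Nat.sub_add_cancel hn]
      ring
    exact (hcop.of_isCoprime_of_dvd_left hσX).dvd_of_dvd_mul_left h2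
  have heq : h.map σ = h :=
    (eq_of_monic_of_dvd_of_natDegree_le (hm.map σ) hm (hgcd _ hσg hσX)
      (natDegree_map σ).ge).symm
  rw [← mem_lifts, lifts_iff_coeff_lifts]
  intro i
  apply mem_range_of_pow_card_eq
  simpa [hσ] using congrArg (fun f => coeff f i) heq

/-- The `k` in `k`-normality is the codegree of the conventional minimal polynomial in `Xⁿ - 1`. -/
lemma isKNormal_of_isMinPoly [Fintype L] {n : ℕ} (hn : 0 < n) (hL : Fintype.card L = Fintype.card K ^ n)
    {α : L} {M : K[X]} (hM : IsMinPoly (Fintype.card K) α M) :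
    IsKNormal (Fintype.card K) n (n - M.natDegree) α := by
  let _ := Classical.decEq L
  let _ := Classical.decEq L[X]
  obtain ⟨hMm, hM0, hMdvd⟩ := hM
  have hXm : (X ^ n - 1 : K[X]).Monic := by simpa using monic_X_pow_sub_C (1 : K) hn.ne'
  have hXd : (X ^ n - 1 : K[X]).natDegree = n := by
    simpa using natDegree_X_pow_sub_C (n := n) (r := (1 : K))
  have hXmap : (X ^ n - 1 : K[X]).map (algebraMap K L) = X ^ n - 1 := by simp
  unfold IsKNormal
  set g := EuclideanDomain.gcd (gpoly (Fintype.card K) n α) (X ^ n - 1) with hgdef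
  have hgg : g ∣ gpoly (Fintype.card K) n α := EuclideanDomain.gcd_dvd_left _ _
  have hgX : g ∣ X ^ n - 1 := EuclideanDomain.gcd_dvd_right _ _
  have hX0 : (X ^ n - 1 : L[X]) ≠ 0 := by
    rw [← hXmap]
    exact (hXm.map _).ne_zero
  have hg0 : g ≠ 0 := ne_zero_of_dvd_ne_zero hX0 hgX
  have hassoc : Associated (normalize g) g := normalize_associated g
  obtain ⟨h, hh⟩ := exists_map_eq_gcd hn hL α (monic_normalize hg0) (hassoc.dvd.trans hgg)
    (hassoc.dvd.trans hgX)
    fun e h1 h2 => (EuclideanDomain.dvd_gcd h1 h2).trans hassoc.symm.dvd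
  have hdeg : h.natDegree = g.natDegree := by
    rw [← natDegree_map (algebraMap K L), hh]
    exact natDegree_eq_of_degree_eq (degree_eq_degree_of_associated hassoc)
  rw [← hh] at hassoc
  have hhX : h ∣ X ^ n - 1 := by
    rw [← map_dvd_map' (algebraMap K L), hXmap]
    exact hassoc.dvd.trans hgX
  -- The cofactor of the gcd kills `α`, so it is divisible by `M`.
  have hle : g.natDegree + M.natDegree ≤ n := by
    obtain ⟨e, he⟩ := hhX
    have he0 : e ≠ 0 := right_ne_zero_of_mul (he ▸ hXm.ne_zero)
    have hMe : M ∣ e := by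
      refine hMdvd e ((lineval_eq_zero_iff hn hL e α).2 ?_)
      rw [← hXmap, he, Polynomial.map_mul, mul_comm]
      exact mul_dvd_mul_left _ (hassoc.dvd.trans hgg)
    have h1 := natDegree_le_of_dvd hMe he0
    have h2 := congrArg natDegree he
    rw [hXd, natDegree_mul (left_ne_zero_of_mul (he ▸ hXm.ne_zero)) he0] at h2
    omega
  -- Conversely, the cofactor of `M` divides `g_α`, hence the gcd.
  have hge : n ≤ g.natDegree + M.natDegree := by
    obtain ⟨e, he⟩ := hMdvd _ (lineval_X_pow_sub_one hL α)
    have hdv := (lineval_eq_zero_iff hn hL M α).1 hM0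
    rw [← hXmap, he, Polynomial.map_mul] at hdv
    have heg : e.map (algebraMap K L) ∣ g := by
      refine EuclideanDomain.dvd_gcd ((mul_dvd_mul_iff_left (hMm.map _).ne_zero).1 hdv) ?_
      rw [← hXmap, he, Polynomial.map_mul]
      exact dvd_mul_left _ _
    have h1 := natDegree_le_of_dvd heg hg0
    rw [natDegree_map] at h1
    have h2 := congrArg natDegree he
    rw [hXd, hMm.natDegree_mul' (right_ne_zero_of_mul (he ▸ hXm.ne_zero))] at h2
    omega
  show g.natDegree = _
  omega

end Normality

open scoped Classical in
theorem stmt_3 (p mm n q s : ℕ) (hp : p.Prime) (hmm : 0 < mm) (hq : q = p ^ mm) (hn : 0 < n)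
    {Fq FQ : Type*} [Field Fq] [Fintype Fq] [Field FQ] [Fintype FQ] [Algebra Fq FQ]
    (hcard : Fintype.card Fq = q) (hcardQ : Fintype.card FQ = q ^ n)
    (hgcd : Nat.gcd n q = 1)
    (P : Fin s → Polynomial Fq) (hmono : ∀ i, (P i).Monic) (hirr : ∀ i, Irreducible (P i))
    (hdist : Function.Injective P)
    (hprod : ∏ i, P i = Polynomial.X ^ n - 1)
    (α : FQ) (hα : α ≠ 0) :
    IsMinPoly q α
      (∏ i ∈ Finset.univ.filter
          (fun i => lineval q ((Polynomial.X ^ n - 1) /ₘ P i) α ≠ 0), P i) ∧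
    IsKNormal q n
      (n - ∑ i ∈ Finset.univ.filter
          (fun i => lineval q ((Polynomial.X ^ n - 1) /ₘ P i) α ≠ 0), (P i).natDegree) α := by
  subst hcard
  have hM := isMinPoly_prod hcardQ P hmono hirr hdist hprod α
  refine ⟨hM, ?_⟩
  rw [← natDegree_prod_of_monic _ _ fun i _ => hmono i]
  exact isKNormal_of_isMinPoly hn hcardQ hM
end

section
/- Let p and n be prime numbers with n ≠ p, q = p^m, Q = q^n, and suppose that the multiplicative order of q modulo n is n − 1. If α ∈ F_Q^× satisfies α ∉ F_q and Tr(α) = 0, then the conventional minimal polynomial of α is m_α(X) = X^{n−1} + X^{n−2} + ⋯ + X + 1 (equivalently, the minimal q-polynomial of α is Tr(x) = Σ_{i=0}^{n−1} x^{q^i}), and α is 1-normal for F_Q/F_q. -/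
/-!
Since `q` has order `n - 1` modulo the prime `n`, the cyclotomic polynomial
`Φ_n = 1 + X + ⋯ + X^(n-1)` is irreducible over `F_q`. As `q ^ n ≡ q` modulo `n` (Fermat), it is
irreducible over `F_Q` as well (`irreducible_cyclotomic_of_orderOf`).

Evaluation `f ↦ f(φ_q)(α)` is the action of `f` on `α` for the `F_q[X]`-module structure given by
the Frobenius endomorphism (`lineval_eq_aeval`), and `Φ_n` kills `α` because `Tr α = 0`. If `g` also
kills `α` and is not divisible by `Φ_n`, then a Bézout relation between `g` and `Φ_n` gives `α = 0`.

For 1-normality, `X - 1` divides `g_α` because `g_α(1) = Tr α = 0`. If `Φ_n` also divided `g_α`, then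
so would `X ^ n - 1 = Φ_n * (X - 1)`, which has degree larger than `g_α`; hence `g_α = 0`, although
its coefficient of degree `n - 1` is `α ≠ 0`. So `g_α` is coprime to `Φ_n` by irreducibility over
`F_Q`, and its gcd with `X ^ n - 1` is `X - 1` up to a unit.
-/


open Polynomial

/-- The `q`-linearized evaluation is the action of a polynomial through the Frobenius
endomorphism. -/
lemma lineval_eq_aeval_s12 {Fq FQ : Type*} [Field Fq] [Fintype Fq] [Field FQ] [Algebra Fq FQ]
    (f : Polynomial Fq) (α : FQ) :
    lineval (Fintype.card Fq) f α =
      aeval (FiniteField.frobeniusAlgHom Fq FQ).toLinearMap f α := by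
  have hpow (i : ℕ) : ((FiniteField.frobeniusAlgHom Fq FQ).toLinearMap ^ i) α =
      α ^ Fintype.card Fq ^ i := by
    induction i with
    | zero => simp
    | succ i ih =>
      rw [pow_succ', Module.End.mul_apply, ih]
      simp [← pow_mul, pow_succ]
  rw [lineval, aeval_eq_sum_range, sum_over_range _ (by simp)]
  simp [LinearMap.sum_apply, hpow, Algebra.smul_def]

/-- If the cardinality of `K` has the largest possible order modulo the prime `n`, then
`Φ_n` is irreducible over `K`: each irreducible factor has degree that order. -/
lemma irreducible_cyclotomic_of_orderOf {K : Type*} [Field K] [Fintype K] {p k n : ℕ}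
    (hp : p.Prime) (hn : n.Prime) (hne : n ≠ p) (hcard : Fintype.card K = p ^ k)
    (horder : orderOf (((p ^ k : ℕ)) : ZMod n) = n - 1) :
    Irreducible (cyclotomic n K) := by
  have : Fact p.Prime := ⟨hp⟩
  have hdeg : (cyclotomic n K).natDegree = n - 1 := by
    rw [natDegree_cyclotomic, Nat.totient_prime hn]
  have hpos : 0 < n - 1 := by have := hn.two_le; omega
  have hnu : ¬ IsUnit (cyclotomic n K) := fun h => by
    rw [natDegree_eq_zero_of_isUnit h] at hdeg; omega
  obtain ⟨P, hP, hPd⟩ := WfDvdMonoid.exists_irreducible_factor hnu (cyclotomic_ne_zero n K)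
  have hco : p.Coprime n := (Nat.coprime_primes hp hn).2 hne.symm
  have h := natDegree_of_dvd_cyclotomic_of_irreducible (p := p) (f := k) (n := n)
    hcard hco hPd hP
  have hPn : P.natDegree = n - 1 := by
    rw [h, ← orderOf_units, ← horder, ZMod.coe_unitOfCoprime]
  exact (associated_of_dvd_of_natDegree_le hPd (cyclotomic_ne_zero n K)
    (by omega)).irreducible hP

lemma gpoly_eval_one {F : Type*} [Field F] (q n : ℕ) (α : F) :
    (gpoly q n α).eval 1 = ∑ i ∈ Finset.range n, α ^ q ^ i := by
  simp [gpoly, eval_finsetSum]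

lemma gpoly_natDegree_le {F : Type*} [Field F] (q n : ℕ) (α : F) :
    (gpoly q n α).natDegree ≤ n - 1 :=
  natDegree_sum_le_of_forall_le _ _ fun _ _ =>
    (natDegree_C_mul_X_pow_le _ _).trans (Nat.sub_le _ _)

lemma gpoly_ne_zero {F : Type*} [Field F] {q n : ℕ} (hn : 0 < n) {α : F} (hα : α ≠ 0) :
    gpoly q n α ≠ 0 := by
  intro h
  have hc : (gpoly q n α).coeff (n - 1) = α := by
    rw [gpoly, finsetSum_coeff, Finset.sum_eq_single 0]
    · simp
    · intro i hi h0
      rw [Finset.mem_range] at hi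
      rw [coeff_C_mul_X_pow, if_neg (by omega)]
    · simp; omega
  exact hα (by rw [← hc, h, coeff_zero])

theorem stmt_12 (p m n q : ℕ) (hp : p.Prime) (hnp : n.Prime) (hne : n ≠ p)
    (hm : 0 < m) (hq : q = p ^ m)
    {Fq FQ : Type*} [Field Fq] [Fintype Fq] [Field FQ] [Fintype FQ] [Algebra Fq FQ]
    (hcard : Fintype.card Fq = q) (hcardQ : Fintype.card FQ = q ^ n)
    (horder : orderOf (q : ZMod n) = n - 1)
    (α : FQ) (hα : α ≠ 0)
    (hα2 : α ∉ Set.range (algebraMap Fq FQ))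
    (htr : ∑ i ∈ Finset.range n, α ^ q ^ i = 0) :
    IsMinPoly q α (∑ i ∈ Finset.range n, Polynomial.X ^ i : Polynomial Fq) ∧
    IsKNormal q n 1 α := by
  have : Fact n.Prime := ⟨hnp⟩
  have hirr : Irreducible (cyclotomic n Fq) :=
    irreducible_cyclotomic_of_orderOf hp hnp hne (hcard.trans hq) (by rw [← hq, horder])
  have hirrQ : Irreducible (cyclotomic n FQ) := by
    refine irreducible_cyclotomic_of_orderOf hp hnp hne (k := m * n)
      (by rw [hcardQ, hq, pow_mul]) ?_
    rw [pow_mul, ← hq, Nat.cast_pow, ZMod.pow_card, horder]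
  constructor
  · rw [← cyclotomic_prime]
    have h0 : lineval q (cyclotomic n Fq) α = 0 := by
      subst hcard
      rw [lineval_eq_aeval_s12, cyclotomic_prime, map_sum, LinearMap.sum_apply, ← htr]
      refine Finset.sum_congr rfl fun i _ => ?_
      rw [← lineval_eq_aeval_s12]
      simp [lineval, X_pow_eq_monomial, sum_monomial_index]
    refine ⟨cyclotomic.monic n Fq, h0, fun g hg => ?_⟩
    by_contra hnd
    obtain ⟨a, b, hab⟩ := (hirr.coprime_iff_not_dvd).2 hnd
    subst hcard
    rw [lineval_eq_aeval_s12] at h0 hg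
    have h1 := congrArg
      (fun f => aeval (FiniteField.frobeniusAlgHom Fq FQ).toLinearMap f α) hab
    simp only [map_add, map_mul, map_one, LinearMap.add_apply, Module.End.mul_apply, h0, hg,
      map_zero, add_zero, Module.End.one_apply] at h1
    exact hα h1.symm
  · have hfac := cyclotomic_prime_mul_X_sub_one FQ n
    have hdvd : (X - 1 : FQ[X]) ∣ gpoly q n α := by
      rw [← C_1, dvd_iff_isRoot, IsRoot, gpoly_eval_one, htr]
    have hcopQ : IsCoprime (cyclotomic n FQ) (gpoly q n α) := by
      refine hirrQ.coprime_iff_not_dvd.2 fun hΦ => ?_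
      have hn0 : (n : FQ) ≠ 0 := by
        have : CharP FQ p := by
          have : Fact p.Prime := ⟨hp⟩
          exact charP_of_card_eq_prime_pow (f := m * n) (by rw [hcardQ, hq, pow_mul])
        rw [Ne, CharP.cast_eq_zero_iff FQ p, Nat.prime_dvd_prime_iff_eq hp hnp]
        exact hne.symm
      -- `Φ_n(1) = n` is nonzero in `F_Q`, so `X - 1` does not divide `Φ_n`.
      have hcop : IsCoprime (X - 1 : FQ[X]) (cyclotomic n FQ) := by
        refine (irreducible_X_sub_C (1 : FQ)).coprime_iff_not_dvd.2 fun h => hn0 ?_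
        rwa [dvd_iff_isRoot, IsRoot, eval_one_cyclotomic_prime] at h
      have h := hcop.symm.mul_dvd hΦ hdvd
      rw [hfac] at h
      have hle := natDegree_le_of_dvd h (gpoly_ne_zero hnp.pos hα)
      rw [← C_1, natDegree_X_pow_sub_C] at hle
      have := gpoly_natDegree_le q n α
      have := hnp.pos
      omega
    change (@EuclideanDomain.gcd _ _ (Classical.decEq _) (gpoly q n α) (X ^ n - 1)).natDegree = 1
    letI := Classical.decEq FQ[X]
    have h1 : (X - 1 : FQ[X]) ∣ EuclideanDomain.gcd (gpoly q n α) (X ^ n - 1) :=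
      EuclideanDomain.dvd_gcd hdvd (hfac ▸ dvd_mul_left _ _)
    have h2 : EuclideanDomain.gcd (gpoly q n α) (X ^ n - 1) ∣ (X - 1 : FQ[X]) := by
      refine IsCoprime.dvd_of_dvd_mul_left
        (hcopQ.symm.of_isCoprime_of_dvd_left (EuclideanDomain.gcd_dvd_left _ _)) ?_
      rw [hfac]
      exact EuclideanDomain.gcd_dvd_right _ _
    have h3 := natDegree_eq_of_degree_eq
      (degree_eq_degree_of_associated (associated_of_dvd_dvd h2 h1))
    rw [h3, ← C_1, natDegree_X_sub_C]
end
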